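/- Let X = ω² + 1 (realized as Iic(ω²) with the subspace topology from the order topology on ordinals) and let f : X → X be continuous such that some w ∈ X has dense orbit. Then the Ellis semigroup E(X,f), as a subspace of X^X with the pointwise convergence topology, is homeomorphic to ω² + 1. -/

import Mathlib

open Topology in
/-- A compact set is finite on `D` as soon as every point of it has a neighbourhood that is. -/
theorem IsCompact.finite_inter_of_nhds {X : Type*} [TopologicalSpace X] {K D : Set X}
    (hK : IsCompact K) (h : ∀ x ∈ K, ∃ V ∈ 𝓝 x, (V ∩ D).Finite) : (K ∩ D).Finite := by
  refine hK.induction_on (p := fun s => (s ∩ D).Finite) (by simp)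
    (fun s t hst ht => ht.subset (Set.inter_subset_inter_left _ hst))
    (fun s t hs ht => by rw [Set.union_inter_distrib_right]; exact hs.union ht) fun x hx => ?_
  obtain ⟨V, hV, hfin⟩ := h x hx
  exact ⟨V, mem_nhdsWithin_of_mem_nhds hV, hfin⟩

/-- The set of non-isolated points. -/
def nonisolated (X : Type*) [TopologicalSpace X] : Set X := {x | ¬ IsOpen {x}}

theorem isClosed_nonisolated (X : Type*) [TopologicalSpace X] : IsClosed (nonisolated X) := by
  rw [← isOpen_compl_iff, isOpen_iff_forall_mem_open]
  intro x hx
  have hx' : IsOpen {x} := not_not.mp hx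
  refine ⟨{x}, ?_, hx', rfl⟩
  rintro y rfl
  exact hx

open Topology in
theorem infinite_of_mem_nhds_of_nonisolated {X : Type*} [TopologicalSpace X] [T1Space X] {y : X}
    (hy : y ∈ nonisolated X) {V : Set X} (hV : V ∈ 𝓝 y) : V.Infinite := by
  have : (𝓝[≠] y).NeBot := ⟨fun h => hy ((isOpen_singleton_iff_punctured_nhds y).2 h)⟩
  exact infinite_of_mem_nhds y hV

open Topology in
theorem infinite_setOf_mem_of_denseRange {X : Type*} [TopologicalSpace X] [T1Space X] {s : ℕ → X}
    (hs : DenseRange s) {y : X} (hy : y ∈ nonisolated X) {V : Set X} (hV : V ∈ 𝓝 y) :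
    {n | s n ∈ V}.Infinite := by
  intro hfin
  have hne : (interior V \ s '' {n | s n ∈ V}).Nonempty :=
    ((infinite_of_mem_nhds_of_nonisolated hy (interior_mem_nhds.2 hV)).sdiff
      (hfin.image s)).nonempty
  obtain ⟨n, hn⟩ := hs.exists_mem_open (isOpen_interior.sdiff (hfin.image s).isClosed) hne
  exact hn.2 ⟨n, interior_subset (s := V) hn.1, rfl⟩

theorem exists_eq_of_denseRange {X : Type*} [TopologicalSpace X] {s : ℕ → X}
    (hs : DenseRange s) {y : X} (hy : y ∉ nonisolated X) : ∃ n, s n = y :=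
  hs.exists_mem_open (not_not.mp hy) (Set.singleton_nonempty y)

section DenseOrbit

open Filter Topology Function

variable {X : Type*} [TopologicalSpace X] {f : X → X} {w t : X}

theorem injective_iterate_of_denseRange [T2Space X] [Infinite X]
    (hw : DenseRange fun n : ℕ => f^[n] w) :
    Injective fun n : ℕ => f^[n] w := by
  have hinf : (Set.range fun n : ℕ => f^[n] w).Infinite := by
    intro hfin
    have := hw.closure_range
    rw [hfin.isClosed.closure_eq] at this
    exact Set.infinite_univ (this ▸ hfin)
  intro i j hij
  by_contra hne
  wlog hlt : i < j generalizing i j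
  · exact this hij.symm (Ne.symm hne) (by omega)
  refine hinf (((Set.finite_Iio j).image fun n : ℕ => f^[n] w).subset ?_)
  rintro _ ⟨n, rfl⟩
  induction n using Nat.strong_induction_on with
  | _ n ih =>
    by_cases hn : n < j
    · exact ⟨n, hn, rfl⟩
    · have h : f^[n] w = f^[n - j + i] w := by
        conv_lhs => rw [show n = n - j + j by omega, iterate_add_apply]
        rw [iterate_add_apply]
        exact congrArg _ hij.symm
      have := ih (n - j + i) (by omega)
      simpa only [h] using this

theorem map_nonisolated [T2Space X] (hf : Continuous f) (hw : DenseRange fun n : ℕ => f^[n] w)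
    (hinj : Injective fun n : ℕ => f^[n] w) {y : X} (hy : y ∈ nonisolated X) :
    f y ∈ nonisolated X := by
  intro ho
  have hV : f ⁻¹' {f y} ∈ 𝓝 y := (ho.preimage hf).mem_nhds rfl
  obtain ⟨m, hm, n, hn, hmn⟩ := (infinite_setOf_mem_of_denseRange hw hy hV).nontrivial
  have : m + 1 = n + 1 := hinj <| by
    simp only [iterate_succ_apply']
    exact (show f (f^[m] w) = f y from hm).trans (show f (f^[n] w) = f y from hn).symm
  omega

theorem iterate_mem_nonisolated [T2Space X] (hf : Continuous f) (hw : DenseRange fun n : ℕ => f^[n] w)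
    (hinj : Injective fun n : ℕ => f^[n] w) {y : X} (hy : y ∈ nonisolated X) (n : ℕ) :
    f^[n] y ∈ nonisolated X := by
  induction n with
  | zero => exact hy
  | succ n ih => rw [iterate_succ_apply']; exact map_nonisolated hf hw hinj ih

theorem exists_nonisolated_ne (hD : (nonisolated X).Infinite) (t : X) :
    ∃ x ∈ nonisolated X, x ≠ t :=
  (hD.sdiff (Set.finite_singleton t)).nonempty

theorem infinite_compl_nonisolated [T2Space X] (hD : (nonisolated X).Infinite)
    (hloc : ∀ x, x ≠ t → ∃ V ∈ 𝓝 x, (V ∩ nonisolated X).Finite) :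
    (nonisolated X)ᶜ.Infinite := by
  obtain ⟨x, hx, hxt⟩ := exists_nonisolated_ne hD t
  obtain ⟨V, hV, hfin⟩ := hloc x hxt
  refine ((infinite_of_mem_nhds_of_nonisolated hx hV).sdiff hfin).mono ?_
  rintro y ⟨hyV, hy⟩ hyD
  exact hy ⟨hyV, hyD⟩

theorem iterate_notMem_nonisolated [T2Space X] (hf : Continuous f)
    (hw : DenseRange fun n : ℕ => f^[n] w)
    (hinj : Injective fun n : ℕ => f^[n] w) (hI : (nonisolated X)ᶜ.Infinite) (n : ℕ) :
    f^[n] w ∉ nonisolated X := by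
  intro hn
  refine hI (((Set.finite_Iio n).image fun n : ℕ => f^[n] w).subset ?_)
  intro y hy
  obtain ⟨m, rfl⟩ := exists_eq_of_denseRange hw hy
  refine ⟨m, ?_, rfl⟩
  by_contra hmn
  simp only [Set.mem_Iio, not_lt] at hmn
  apply hy
  have := iterate_mem_nonisolated hf hw hinj hn (m - n)
  rwa [← iterate_add_apply, Nat.sub_add_cancel hmn] at this

theorem exists_nonisolated_map_eq [CompactSpace X] [T2Space X] (hf : Continuous f)
    (hw : DenseRange fun n : ℕ => f^[n] w)
    (hiso : ∀ n, f^[n] w ∉ nonisolated X) {y : X} (hy : y ∈ nonisolated X) :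
    ∃ x ∈ nonisolated X, f x = y := by
  have hcl : IsClosed (insert w (Set.range f)) := by
    rw [Set.insert_eq]
    exact isClosed_singleton.union (isCompact_range hf).isClosed
  have hsub : (Set.range fun n : ℕ => f^[n] w) ⊆ insert w (Set.range f) := by
    rintro _ ⟨n, rfl⟩
    cases n with
    | zero => exact Or.inl rfl
    | succ n => exact Or.inr ⟨f^[n] w, (iterate_succ_apply' f n w).symm⟩
  rcases hcl.closure_subset_iff.2 hsub (hw y) with rfl | ⟨x, rfl⟩
  · exact absurd hy (hiso 0)
  · refine ⟨x, ?_, rfl⟩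
    by_contra hx
    obtain ⟨n, rfl⟩ := exists_eq_of_denseRange hw hx
    refine hiso (n + 1) ?_
    rwa [iterate_succ_apply']

theorem finite_inter_nonisolated [CompactSpace X] {K : Set X} (hK : IsClosed K) (ht : t ∉ K)
    (hloc : ∀ x, x ≠ t → ∃ V ∈ 𝓝 x, (V ∩ nonisolated X).Finite) :
    (K ∩ nonisolated X).Finite :=
  hK.isCompact.finite_inter_of_nhds fun x hx => hloc x fun h => ht (h ▸ hx)

theorem map_eq_of_locally_finite [CompactSpace X] [T2Space X] (hf : Continuous f)
    (hw : DenseRange fun n : ℕ => f^[n] w)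
    (hinj : Injective fun n : ℕ => f^[n] w) (hD : (nonisolated X).Infinite)
    (hloc : ∀ x, x ≠ t → ∃ V ∈ 𝓝 x, (V ∩ nonisolated X).Finite) : f t = t := by
  have hiso := iterate_notMem_nonisolated hf hw hinj (infinite_compl_nonisolated hD hloc)
  by_contra hne
  obtain ⟨V, hV, hfin⟩ := hloc (f t) hne
  have hW : f ⁻¹' V ∈ 𝓝 t := hf.continuousAt hV
  have hK : ((interior (f ⁻¹' V))ᶜ ∩ nonisolated X).Finite :=
    finite_inter_nonisolated isOpen_interior.isClosed_compl
      (fun h => h (mem_interior_iff_mem_nhds.2 hW)) hloc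
  refine hD ((hfin.union (hK.image f)).subset fun y hy => ?_)
  obtain ⟨x, hx, rfl⟩ := exists_nonisolated_map_eq hf hw hiso hy
  by_cases h : x ∈ interior (f ⁻¹' V)
  · exact Or.inl ⟨interior_subset (s := f ⁻¹' V) h, hy⟩
  · exact Or.inr ⟨x, ⟨h, hx⟩, rfl⟩

/-- A finite invariant set of non-isolated points avoiding `t` would attract the dense orbit. -/
theorem eq_empty_of_invariant [CompactSpace X] [T2Space X] (hf : Continuous f)
    (hw : DenseRange fun n : ℕ => f^[n] w)
    (hinj : Injective fun n : ℕ => f^[n] w) (hD : (nonisolated X).Infinite)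
    (hloc : ∀ x, x ≠ t → ∃ V ∈ 𝓝 x, (V ∩ nonisolated X).Finite)
    {P : Set X} (hP : P.Finite) (hPD : P ⊆ nonisolated X) (htP : t ∉ P)
    (hPf : Set.MapsTo f P P) : P = ∅ := by
  by_contra hne
  obtain ⟨x, hx⟩ := Set.nonempty_iff_ne_empty.2 hne
  have hclosed : ∀ p ∈ P, ∃ U ∈ 𝓝 p, IsClosed U ∧ U ⊆ (nonisolated X \ P)ᶜ := by
    intro p hp
    apply exists_mem_nhds_isClosed_subset
    obtain ⟨V, hV, hfin⟩ := hloc p fun h => htP (h ▸ hp)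
    have hfin' : ((V ∩ nonisolated X) \ P).Finite := hfin.sdiff
    filter_upwards [hV, hfin'.isClosed.isOpen_compl.mem_nhds fun h => h.2 hp] with y hyV hy hyD
    exact hy ⟨⟨hyV, hyD.1⟩, hyD.2⟩
  choose! U hUn hUc hUs using hclosed
  set W : Set X := ⋃ p ∈ P, U p with hW
  have hWc : IsClosed W := hP.isClosed_biUnion hUc
  have hWn : ∀ p ∈ P, W ∈ 𝓝 p := fun p hp => mem_of_superset (hUn p hp)
    (Set.subset_biUnion_of_mem hp)
  have hWD : ∀ y ∈ W, y ∈ nonisolated X → y ∈ P := by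
    intro y hy hyD
    obtain ⟨p, hp, hyp⟩ := Set.mem_iUnion₂.1 hy
    by_contra hyP
    exact hUs p hp hyp ⟨hyD, hyP⟩
  have hexit : (W \ interior (f ⁻¹' W)).Finite := by
    have := (hWc.sdiff isOpen_interior).isCompact.finite_inter_of_nhds (D := Set.univ)
      (K := W \ interior (f ⁻¹' W)) fun y hy => ?_
    · simpa using this
    · have hyD : y ∉ nonisolated X := fun hyD => hy.2 <| mem_interior_iff_mem_nhds.2 <|
        hf.continuousAt (hWn _ (hPf (hWD y hy.1 hyD)))
      exact ⟨{y}, (not_not.mp hyD : IsOpen {y}).mem_nhds rfl, by simp⟩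
  have hexit' : {n : ℕ | f^[n] w ∈ W \ interior (f ⁻¹' W)}.Finite :=
    hexit.preimage hinj.injOn
  obtain ⟨N, hN⟩ := hexit'.bddAbove
  obtain ⟨M, hM, hNM⟩ :=
    (infinite_setOf_mem_of_denseRange hw (hPD hx) (hWn x hx)).exists_gt N
  have hstay : ∀ n, M ≤ n → f^[n] w ∈ W := by
    intro n hn
    induction n, hn using Nat.le_induction with
    | base => exact hM
    | succ n hn ih =>
      rw [iterate_succ_apply']
      by_contra h
      have : n ≤ N := hN ⟨ih, fun h' => h (interior_subset (s := f ⁻¹' W) h')⟩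
      omega
  refine hD (hP.subset fun y hy => hWD y ?_ hy)
  by_contra hyW
  obtain ⟨n, hn, hMn⟩ :=
    (infinite_setOf_mem_of_denseRange hw hy (hWc.isOpen_compl.mem_nhds hyW)).exists_gt M
  exact hn (hstay n hMn.le)

theorem tendsto_iterate_of_nonisolated [CompactSpace X] [T2Space X] (hf : Continuous f)
    (hw : DenseRange fun n : ℕ => f^[n] w)
    (hinj : Injective fun n : ℕ => f^[n] w) (hD : (nonisolated X).Infinite)
    (hloc : ∀ x, x ≠ t → ∃ V ∈ 𝓝 x, (V ∩ nonisolated X).Finite)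
    {x : X} (hx : x ∈ nonisolated X) : Tendsto (fun n : ℕ => f^[n] x) cofinite (𝓝 t) := by
  have hft := map_eq_of_locally_finite hf hw hinj hD hloc
  have hper : ∀ i j : ℕ, i < j → f^[i] x = f^[j] x → f^[i] x = t := by
    intro i j hij h
    by_contra hne
    set y := f^[i] x with hy
    have hyper : IsPeriodicPt f (j - i) y := by
      change f^[j - i] y = y
      rw [hy, ← iterate_add_apply, Nat.sub_add_cancel hij.le, ← h]
    have hP := eq_empty_of_invariant (t := t) (P := (fun k : ℕ => f^[k] y) '' Set.Iio (j - i))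
      hf hw hinj hD hloc ((Set.finite_Iio _).image _) ?_ ?_ ?_
    · exact (hP ▸ ⟨0, by simpa using hij, rfl⟩ : y ∈ (∅ : Set X))
    · rintro _ ⟨k, -, rfl⟩
      exact iterate_mem_nonisolated hf hw hinj
        (iterate_mem_nonisolated hf hw hinj hx i) k
    · rintro ⟨k, hk, hkt⟩
      simp only [Set.mem_Iio] at hk
      apply hne
      have h1 : f^[j - i - k] (f^[k] y) = y := by
        rw [← iterate_add_apply, Nat.sub_add_cancel hk.le]; exact hyper
      have hkt' : f^[k] y = t := hkt
      rw [← h1, hkt', iterate_fixed hft]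
    · rintro _ ⟨k, hk, rfl⟩
      simp only [Set.mem_Iio] at hk
      refine ⟨(k + 1) % (j - i), Nat.mod_lt _ (by omega), ?_⟩
      change f^[(k + 1) % (j - i)] y = f (f^[k] y)
      rw [hyper.iterate_mod_apply, iterate_succ_apply']
  intro V hV
  have hfin : ((interior V)ᶜ ∩ nonisolated X).Finite :=
    finite_inter_nonisolated isOpen_interior.isClosed_compl
      (fun h => h (mem_interior_iff_mem_nhds.2 hV)) hloc
  have hpre : {n : ℕ | f^[n] x ∈ (interior V)ᶜ ∩ nonisolated X}.Finite := by
    refine Set.Finite.preimage ?_ hfin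
    intro i hi j hj hij
    have hne : f^[i] x ≠ t := fun h => hi.1 (by
      simpa only [h] using mem_interior_iff_mem_nhds.2 hV)
    rcases lt_trichotomy i j with h | h | h
    · exact absurd (hper i j h hij) hne
    · exact h
    · exact absurd (hij.trans (hper j i h hij.symm)) hne
  change {n : ℕ | f^[n] x ∈ V}ᶜ.Finite
  refine hpre.subset fun n hn => ⟨fun h => hn (interior_subset (s := V) h), ?_⟩
  exact iterate_mem_nonisolated hf hw hinj hx n

theorem exists_ultrafilter_tendsto_of_mem_closure {Y : Type*} [TopologicalSpace Y] {F : ℕ → Y}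
    {g : Y} (hg : g ∈ closure (Set.range F)) : ∃ u : Ultrafilter ℕ, Tendsto F u (𝓝 g) := by
  have : (comap F (𝓝 g)).NeBot := by
    rw [comap_neBot_iff]
    intro V hV
    obtain ⟨_, hy, n, rfl⟩ := mem_closure_iff_nhds.1 hg V hV
    exact ⟨n, hy⟩
  exact ⟨Ultrafilter.of (comap F (𝓝 g)), tendsto_iff_comap.2 (Ultrafilter.of_le _)⟩

/-- An element of the Ellis semigroup is an iterate, or it sends all non-isolated points to `t`
and moves the dense orbit into the non-isolated points. -/
theorem mem_closure_iterate_cases [CompactSpace X] [T2Space X] (hf : Continuous f)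
    (hw : DenseRange fun n : ℕ => f^[n] w)
    (hinj : Injective fun n : ℕ => f^[n] w) (hD : (nonisolated X).Infinite)
    (hloc : ∀ x, x ≠ t → ∃ V ∈ 𝓝 x, (V ∩ nonisolated X).Finite)
    {g : X → X} (hg : g ∈ closure (Set.range fun n : ℕ => f^[n])) :
    (∃ n : ℕ, g = f^[n]) ∨ (g w ∈ nonisolated X ∧ (∀ x ∈ nonisolated X, g x = t) ∧
      ∀ n : ℕ, g (f^[n] w) = f^[n] (g w)) := by
  obtain ⟨u, hu⟩ := exists_ultrafilter_tendsto_of_mem_closure hg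
  have hux : ∀ x, Tendsto (fun n : ℕ => f^[n] x) u (𝓝 (g x)) := tendsto_pi_nhds.1 hu
  rcases u.le_cofinite_or_eq_pure with hcof | ⟨n, rfl⟩
  · refine Or.inr ⟨fun ho => ?_, fun x hx => ?_, fun n => ?_⟩
    · have h1 : ∀ᶠ n : ℕ in u, f^[n] w = g w := hux w (ho.mem_nhds rfl)
      have h2 : {n : ℕ | f^[n] w = g w}.Finite :=
        Set.Subsingleton.finite fun i hi j hj => hinj (Eq.trans hi (Eq.symm hj))
      obtain ⟨n, hn, hn'⟩ := (h1.and (hcof h2.compl_mem_cofinite)).exists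
      exact hn' hn
    · exact tendsto_nhds_unique (hux x)
        ((tendsto_iterate_of_nonisolated hf hw hinj hD hloc hx).mono_left hcof)
    · refine tendsto_nhds_unique (hux _)
        ((((hf.iterate n).tendsto _).comp (hux w)).congr fun m => ?_)
      simp only [comp_apply, ← iterate_add_apply, Nat.add_comm]
  · refine Or.inl ⟨n, ?_⟩
    exact tendsto_nhds_unique (hu : Tendsto _ (pure n) _) (tendsto_pure_nhds _ n)

/-- On a compact Hausdorff space whose non-isolated points accumulate only at `t`, evaluation at
a point with dense orbit is a homeomorphism from the Ellis semigroup onto the space. -/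
theorem nonempty_ellis_homeomorph [CompactSpace X] [T2Space X] (hf : Continuous f)
    (hw : DenseRange fun n : ℕ => f^[n] w) (hD : (nonisolated X).Infinite)
    (hloc : ∀ x, x ≠ t → ∃ V ∈ 𝓝 x, (V ∩ nonisolated X).Finite) :
    Nonempty (closure (Set.range fun n : ℕ => f^[n]) ≃ₜ X) := by
  have : Infinite X := Set.infinite_univ_iff.1 (hD.mono (Set.subset_univ _))
  have hinj := injective_iterate_of_denseRange hw
  have hiso := iterate_notMem_nonisolated hf hw hinj (infinite_compl_nonisolated hD hloc)
  set E := closure (Set.range fun n : ℕ => f^[n])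
  have : CompactSpace E := isCompact_iff_compactSpace.1 isClosed_closure.isCompact
  have hcont : Continuous fun g : E => g.1 w := (continuous_apply w).comp continuous_subtype_val
  have hsurj : Surjective fun g : E => g.1 w := by
    rw [← Set.range_eq_univ, Set.eq_univ_iff_forall]
    intro y
    refine (isCompact_range hcont).isClosed.closure_subset_iff.2 ?_ (hw y)
    rintro _ ⟨n, rfl⟩
    exact ⟨⟨f^[n], subset_closure ⟨n, rfl⟩⟩, rfl⟩
  have hinjE : Injective fun g : E => g.1 w := by
    rintro ⟨g, hg⟩ ⟨h, hh⟩ (hgh : g w = h w)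
    refine Subtype.ext (show g = h from ?_)
    rcases mem_closure_iterate_cases hf hw hinj hD hloc hg with ⟨m, rfl⟩ | ⟨hg1, hg2, hg3⟩ <;>
    rcases mem_closure_iterate_cases hf hw hinj hD hloc hh with ⟨n, rfl⟩ | ⟨hh1, hh2, hh3⟩
    · rw [hinj hgh]
    · exact absurd (hgh ▸ hh1) (hiso m)
    · exact absurd (hgh ▸ hg1) (hiso n)
    · funext x
      by_cases hx : x ∈ nonisolated X
      · rw [hg2 x hx, hh2 x hx]
      · obtain ⟨n, rfl⟩ := exists_eq_of_denseRange hw hx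
        exact (hg3 n).trans ((congrArg _ hgh).trans (hh3 n).symm)
  exact ⟨Continuous.homeoOfEquivCompactToT2 (f := Equiv.ofBijective _ ⟨hinjE, hsurj⟩) hcont⟩

end DenseOrbit

section OrdinalInterval

open Ordinal Topology

theorem mem_nonisolated_Iic_iff {a : Ordinal} (x : Set.Iic a) :
    x ∈ nonisolated (Set.Iic a) ↔ x.1 ≠ 0 ∧ ω ∣ x.1 := by
  have hopen : IsOpen (Set.Iic a) := by
    rw [← Order.Iio_succ]; exact isOpen_Iio
  rw [← isSuccPrelimit_iff_omega0_dvd, ← isSuccLimit_iff, ← not_iff_not,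
    ← SuccOrder.isOpen_singleton_iff, nonisolated, Set.mem_ofPred_eq, not_not,
    hopen.isOpenEmbedding_subtypeVal.isOpen_iff_image_isOpen, Set.image_singleton]

theorem omega0_opow_two : ω ^ (2 : Ordinal) = ω * ω := by
  rw [← one_add_one_eq_two, opow_add, opow_one]

theorem infinite_nonisolated_Iic_omega0_sq :
    (nonisolated (Set.Iic (ω ^ (2 : Ordinal)))).Infinite := by
  have hle (n : ℕ) : ω * (n + 1 : ℕ) ≤ ω ^ (2 : Ordinal) := by
    rw [omega0_opow_two]
    exact mul_le_mul_right (natCast_lt_omega0 _).le ω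
  refine Set.infinite_of_injective_forall_mem
    (f := fun n : ℕ => (⟨ω * (n + 1 : ℕ), hle n⟩ : Set.Iic (ω ^ (2 : Ordinal)))) ?_ ?_
  · intro m n h
    have h' := congrArg Subtype.val h
    have h₂ : ((m + 1 : ℕ) : Ordinal) = (n + 1 : ℕ) := mul_left_cancel₀ omega0_ne_zero h'
    exact Nat.succ_injective (Nat.cast_injective h₂)
  · intro n
    rw [mem_nonisolated_Iic_iff]
    exact ⟨mul_ne_zero omega0_ne_zero (by simp), dvd_mul_right _ _⟩

theorem exists_nhds_finite_inter_nonisolated_Iic_omega0_sq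
    (x : Set.Iic (ω ^ (2 : Ordinal))) (hx : x ≠ ⟨ω ^ (2 : Ordinal), Set.self_mem_Iic⟩) :
    ∃ V ∈ 𝓝 x, (V ∩ nonisolated (Set.Iic (ω ^ (2 : Ordinal)))).Finite := by
  have hlt : x.1 < ω * ω :=
    omega0_opow_two ▸ lt_of_le_of_ne x.2 fun h => hx (Subtype.ext h)
  obtain ⟨n, hn⟩ := lt_omega0.1 ((lt_mul_iff_div_lt omega0_ne_zero).1 hlt)
  have hxn : x.1 < ω * (n + 1 : ℕ) := by
    rw [lt_mul_iff_div_lt omega0_ne_zero, hn]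
    exact_mod_cast Nat.lt_succ_self n
  refine ⟨{y | y.1 < ω * (n + 1 : ℕ)},
    (isOpen_Iio.preimage continuous_subtype_val).mem_nhds hxn, ?_⟩
  refine Set.Finite.of_finite_image (f := Subtype.val) ?_ Subtype.val_injective.injOn
  refine ((Set.finite_Iio (n + 1)).image fun k : ℕ => ω * (k : Ordinal)).subset ?_
  rintro _ ⟨y, ⟨hyn, hy⟩, rfl⟩
  obtain ⟨-, c, hc⟩ := (mem_nonisolated_Iic_iff y).1 hy
  have hcn : c < (n + 1 : ℕ) := by
    rw [Set.mem_ofPred_eq, hc] at hyn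
    exact lt_of_mul_lt_mul_left hyn zero_le
  obtain ⟨k, rfl⟩ := lt_omega0.1 (hcn.trans (natCast_lt_omega0 _))
  exact ⟨k, by exact_mod_cast hcn, hc.symm⟩

universe u v

/-- Lifting to a larger universe is an order isomorphism on initial segments. -/
theorem nonempty_orderIso_Iic_lift (a : Ordinal.{u}) :
    Nonempty (Set.Iic a ≃o Set.Iic (lift.{v} a)) := by
  refine ⟨StrictMono.orderIsoOfSurjective
    (fun x : Set.Iic a => (⟨lift.{v} x.1, lift_le.2 x.2⟩ : Set.Iic (lift.{v} a)))
    (fun x y h => lift_lt.2 h) ?_⟩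
  rintro ⟨y, hy⟩
  obtain ⟨x, rfl⟩ := mem_range_lift_of_le hy
  exact ⟨⟨x, lift_le.1 hy⟩, rfl⟩

theorem nonempty_homeomorph_Iic_omega0_sq :
    Nonempty (Set.Iic ((ω : Ordinal.{u}) ^ (2 : Ordinal.{u})) ≃ₜ
      Set.Iic ((ω : Ordinal.{v}) ^ (2 : Ordinal.{v}))) := by
  obtain ⟨e₁⟩ := nonempty_orderIso_Iic_lift.{u, v} (ω ^ (2 : Ordinal))
  obtain ⟨e₂⟩ := nonempty_orderIso_Iic_lift.{v, u} (ω ^ (2 : Ordinal))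
  have h : lift.{v} ((ω : Ordinal.{u}) ^ (2 : Ordinal.{u})) =
      lift.{u} ((ω : Ordinal.{v}) ^ (2 : Ordinal.{v})) := by
    simp only [omega0_opow_two, lift_mul, lift_omega0]
  exact ⟨((e₁.trans (OrderIso.setCongr _ _ (by rw [h]))).trans e₂.symm).toHomeomorph⟩

end OrdinalInterval

open Ordinal in
/-- Theorem 3.3 (homeomorphism part): For a dynamical system on `ω² + 1` (realized as
`Iic (ω²)` with the order topology) with a dense orbit, the Ellis semigroup `E(X,f)`,
as a subspace of `X → X` with the pointwise-convergence topology, is homeomorphic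
to `ω² + 1`. -/
theorem ellis_homeomorphic_omega_sq
    (f : Set.Iic (omega0 ^ (2 : Ordinal)) → Set.Iic (omega0 ^ (2 : Ordinal)))
    (hf : Continuous f)
    (w : Set.Iic (omega0 ^ (2 : Ordinal)))
    (hw : Dense (Set.range fun n : ℕ => f^[n] w)) :
    Nonempty ((closure {g : Set.Iic (omega0 ^ (2 : Ordinal)) →
        Set.Iic (omega0 ^ (2 : Ordinal)) | ∃ n : ℕ, g = f^[n]} : Set _) ≃ₜ
      Set.Iic (omega0 ^ (2 : Ordinal))) := by
  have : CompactSpace (Set.Iic (ω ^ (2 : Ordinal))) :=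
    isCompact_iff_compactSpace.1 (by rw [← Set.Icc_bot]; exact isCompact_Icc)
  have hE : {g : Set.Iic (ω ^ (2 : Ordinal)) → Set.Iic (ω ^ (2 : Ordinal)) | ∃ n : ℕ, g = f^[n]} =
      Set.range fun n : ℕ => f^[n] := by
    ext g; simp [eq_comm]
  rw [hE]
  obtain ⟨e⟩ := nonempty_ellis_homeomorph hf hw infinite_nonisolated_Iic_omega0_sq
    exists_nhds_finite_inter_nonisolated_Iic_omega0_sq
  obtain ⟨e'⟩ := nonempty_homeomorph_Iic_omega0_sq
  exact ⟨e.trans e'⟩
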